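/- arXiv:1801.00204 — 5 statements merged into one kernel-verified Lean document; each statement's English description precedes it below -/
import Mathlib

section
/- Let c ∈ ℝ with -1 < c < 0. Then K⁺ = W^s(α) ∪ W^s(θ) ∪ W^s(p) ∪ W^s(f(p)) ∪ W^s(f²(p)). -/
open Set Filter Topology

/-- The map `f(x,y) = (xy + c, x)`. -/
noncomputable def fc (c : ℝ) : ℝ × ℝ → ℝ × ℝ := fun z => (z.1 * z.2 + c, z.1)

/-- `a₁ = (1 - √(1-4c))/2`. -/
noncomputable def a1 (c : ℝ) : ℝ := (1 - Real.sqrt (1 - 4 * c)) / 2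

/-- `a₂ = (1 + √(1-4c))/2`. -/
noncomputable def a2 (c : ℝ) : ℝ := (1 + Real.sqrt (1 - 4 * c)) / 2

/-!
Writing the orbit of `z` as `(x (n + 1), x n)` turns the dynamics into the recurrence
`x (n + 2) = x (n + 1) * x n + c`. A bounded solution falls into one of three regimes.

* Two consecutive terms lie in `[-1, 1 + c]`. Either they are a point of the 3-cycle, or the
  solution is trapped in some `[A, B] ⊆ (-1, 1)`. The set of its cluster values is then compact, and
  each of its elements is `a * b + c` with `a = b * d + c` for cluster values `a`, `b`, `d`; applied
  to the least and the greatest cluster value this forces both to equal `a₁`.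
* All terms are nonnegative. The recurrence is monotone on nonnegative sequences, so the solution
  is eventually on one side of the constant solution `a₂`, and then its distance to `a₂` grows
  geometrically unless it vanishes, or it alternates around `a₂` and the distance contracts.
* Otherwise the signs eventually follow the pattern `-, -, +` of the 3-cycle. After multiplication
  by these signs the solution and the cycle are nonnegative, and the same comparison applies.
-/

section Sequences

theorem tendsto_of_forall_residue {α : Type*} {l : Filter α} {x : ℕ → α} {p : ℕ} (hp : p ≠ 0)
    (h : ∀ j < p, Tendsto (fun m => x (p * m + j)) atTop l) : Tendsto x atTop l := by
  refine tendsto_def.2 fun s hs => ?_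
  have hev : ∀ᶠ m in atTop, ∀ j ∈ Finset.range p, x (p * m + j) ∈ s :=
    (Finset.eventually_all _).2 fun j hj => h j (Finset.mem_range.1 hj) hs
  filter_upwards [(Nat.tendsto_div_const_atTop hp).eventually hev] with n hn
  have hmem := hn (n % p) (Finset.mem_range.2 (Nat.mod_lt n (Nat.pos_of_ne_zero hp)))
  rwa [Nat.div_add_mod] at hmem

theorem tendsto_zero_of_norm_add_le_mul {e : ℕ → ℝ} {p : ℕ} {q : ℝ} (hp : p ≠ 0) (hq : q < 1)
    (h : ∀ n, ‖e (n + p)‖ ≤ q * ‖e n‖) : Tendsto e atTop (𝓝 0) := by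
  refine tendsto_of_forall_residue hp fun j _ => ?_
  refine (summable_of_ratio_norm_eventually_le hq (.of_forall fun m => ?_)).tendsto_atTop_zero
  rw [show p * (m + 1) + j = p * m + j + p by ring]
  exact h _

theorem exists_abs_le_of_tendsto {x : ℕ → ℝ} {l : ℝ} (h : Tendsto x atTop (𝓝 l)) :
    ∃ B, ∀ n, |x n| ≤ B := by
  simpa using (Metric.isBounded_range_of_tendsto x h).exists_norm_le

theorem nonpos_of_mul_le_succ_of_le {s : ℕ → ℝ} {a B : ℝ} (ha : 1 < a)
    (hs : ∀ n, a * s n ≤ s (n + 1)) (hB : ∀ n, s n ≤ B) : s 0 ≤ 0 := by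
  by_contra! hpos
  have hgrow : ∀ n, a ^ n * s 0 ≤ s n := fun n => by
    induction n with
    | zero => simp
    | succ n ih =>
      calc a ^ (n + 1) * s 0 = a * (a ^ n * s 0) := by ring
        _ ≤ a * s n := by gcongr
        _ ≤ s (n + 1) := hs n
  obtain ⟨n, hn⟩ := pow_unbounded_of_one_lt (B / s 0) ha
  rw [div_lt_iff₀ hpos] at hn
  linarith [hgrow n, hB n]

theorem eventually_le_of_succ_le_max_sub {u : ℕ → ℝ} {A δ : ℝ} (hδ : 0 < δ)
    (h : ∀ n, u (n + 1) ≤ max A (u n - δ)) : ∀ᶠ n in atTop, u n ≤ A := by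
  have hdecay : ∀ n : ℕ, u n ≤ max A (u 0 - n * δ) := fun n => by
    induction n with
    | zero => simp
    | succ n ih =>
      rcases le_max_iff.1 (h n) with hA | hA
      · exact hA.trans (le_max_left _ _)
      · rcases le_max_iff.1 ih with hn | hn
        · exact le_max_of_le_left (by linarith)
        · exact le_max_of_le_right (by push_cast; linarith)
  obtain ⟨N, hN⟩ := exists_nat_gt ((u 0 - A) / δ)
  filter_upwards [eventually_ge_atTop N] with n hn
  rw [div_lt_iff₀ hδ] at hN
  have hmul : (N : ℝ) * δ ≤ n * δ := by gcongr
  exact (hdecay n).trans (max_le le_rfl (by linarith))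

theorem mul_mem_Icc_of_mem_Icc {m M a b : ℝ} (hm : m ≤ 0) (hM : 0 ≤ M) (ha : a ∈ Icc m M)
    (hb : b ∈ Icc m M) : a * b ∈ Icc (m * M) (max (m ^ 2) (M ^ 2)) := by
  obtain ⟨ha₁, ha₂⟩ := ha
  obtain ⟨hb₁, hb₂⟩ := hb
  refine ⟨?_, le_max_iff.2 ?_⟩
  · rcases le_total 0 a with _ | _ <;> rcases le_total 0 b with _ | _ <;> nlinarith
  · rcases le_total 0 a with _ | _ <;> rcases le_total 0 b with _ | _
    · right; nlinarith
    all_goals left; nlinarith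

end Sequences

section FixedPoints

variable {c : ℝ}

theorem eq_a1_of_neg {t : ℝ} (ht : t < 0) (hfix : t * t + c = t) : t = a1 c := by
  have hsqrt : √(1 - 4 * c) = 1 - 2 * t := by
    rw [show 1 - 4 * c = (1 - 2 * t) ^ 2 by linear_combination -4 * hfix]
    exact Real.sqrt_sq (by linarith)
  rw [a1, hsqrt]
  ring

theorem one_lt_a2 (hc : c < 0) : 1 < a2 c := by
  have hsqrt : 1 < √(1 - 4 * c) := Real.lt_sqrt_of_sq_lt (by linarith)
  rw [a2]
  linarith

theorem a2_mul_self_add (hc : c < 0) : a2 c * a2 c + c = a2 c := by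
  have hsq := Real.mul_self_sqrt (show 0 ≤ 1 - 4 * c by linarith)
  rw [a2]
  linear_combination hsq / 4

end FixedPoints

/-- The second-order recurrence `x (n + 2) = x (n + 1) * x n + b n`. For the constant forcing
`b = c` its solutions are the second coordinates of the orbits of `fc c`; a general forcing `b` is
allowed so that solutions can be multiplied by a sequence of signs. -/
def IsProductRecurrence (b x : ℕ → ℝ) : Prop :=
  ∀ n, x (n + 2) = x (n + 1) * x n + b n

namespace IsProductRecurrence

section Comparison

variable {b x y : ℕ → ℝ}

theorem shift (hx : IsProductRecurrence b x) (N : ℕ) :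
    IsProductRecurrence (fun n => b (n + N)) (fun n => x (n + N)) := fun n => by
  simpa only [add_right_comm _ N] using hx (n + N)

theorem mul {σ : ℕ → ℝ} (hσ : IsProductRecurrence 0 σ) (hx : IsProductRecurrence b x) :
    IsProductRecurrence (fun n => σ (n + 2) * b n) (fun n => σ n * x n) := fun n => by
  have hσn : σ (n + 2) = σ (n + 1) * σ n := by simpa using hσ n
  linear_combination σ (n + 2) * hx n + x (n + 1) * x n * hσn

theorem ext (hx : IsProductRecurrence b x) (hy : IsProductRecurrence b y) (h0 : x 0 = y 0)
    (h1 : x 1 = y 1) : x = y := funext fun n => by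
  induction n using Nat.twoStepInduction with
  | zero => exact h0
  | one => exact h1
  | more n ih₀ ih₁ => rw [hx n, hy n, ih₀, ih₁]

theorem forall_mem {c : ℝ} {S : Set ℝ} (hx : IsProductRecurrence (fun _ => c) x)
    (hS : ∀ u ∈ S, ∀ v ∈ S, u * v + c ∈ S) (h0 : x 0 ∈ S) (h1 : x 1 ∈ S) (n : ℕ) : x n ∈ S := by
  induction n using Nat.twoStepInduction with
  | zero => exact h0
  | one => exact h1
  | more n ih₀ ih₁ => exact hx n ▸ hS _ ih₁ _ ih₀

theorem eventually_le (hx : IsProductRecurrence b x) (hy : IsProductRecurrence b y)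
    (hx0 : ∀ n, 0 ≤ x n) (hy0 : ∀ n, 0 ≤ y n) {N : ℕ} (h0 : x N ≤ y N)
    (h1 : x (N + 1) ≤ y (N + 1)) : ∀ᶠ n in atTop, x n ≤ y n := by
  have hle : ∀ k, x (N + k) ≤ y (N + k) := fun k => by
    induction k using Nat.twoStepInduction with
    | zero => exact h0
    | one => exact h1
    | more k ih₀ ih₁ =>
      calc x (N + k + 2) = x (N + k + 1) * x (N + k) + b (N + k) := hx _
        _ ≤ y (N + k + 1) * y (N + k) + b (N + k) := by
          gcongr
          exacts [hx0 _, hy0 _, ih₁]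
        _ = y (N + k + 2) := (hy _).symm
  filter_upwards [eventually_ge_atTop N] with n hn
  simpa [hn] using hle (n - N)

theorem eventually_le_or_ge_or_alternating (hx : IsProductRecurrence b x)
    (hy : IsProductRecurrence b y) (hx0 : ∀ n, 0 ≤ x n) (hy0 : ∀ n, 0 ≤ y n) :
    (∀ᶠ n in atTop, x n ≤ y n) ∨ (∀ᶠ n in atTop, y n ≤ x n) ∨
      ∀ n, (x n - y n) * (x (n + 1) - y (n + 1)) < 0 := by
  by_contra hnot
  obtain ⟨hnle, hnge, halt⟩ : _ ∧ _ ∧ _ := by simpa only [not_or] using hnot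
  obtain ⟨n, hn⟩ := not_forall.1 halt
  rw [not_lt] at hn
  rcases mul_nonneg_iff.1 hn with ⟨h0, h1⟩ | ⟨h0, h1⟩
  · exact hnge (hy.eventually_le hx hy0 hx0 (sub_nonneg.1 h0) (sub_nonneg.1 h1))
  · exact hnle (hx.eventually_le hy hx0 hy0 (sub_nonpos.1 h0) (sub_nonpos.1 h1))

theorem abs_sub_le_of_alternating (hx : IsProductRecurrence b x) (hy : IsProductRecurrence b y)
    {n : ℕ} (hx0 : 0 ≤ x n) (h01 : (x n - y n) * (x (n + 1) - y (n + 1)) < 0)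
    (h12 : (x (n + 1) - y (n + 1)) * (x (n + 2) - y (n + 2)) < 0) :
    |x (n + 2) - y (n + 2)| ≤ y (n + 1) * |x n - y n| := by
  have hdiff : x (n + 2) - y (n + 2) =
      y (n + 1) * (x n - y n) + x n * (x (n + 1) - y (n + 1)) := by
    rw [hx n, hy n]; ring
  rcases mul_neg_iff.1 h01 with ⟨h0, h1⟩ | ⟨h0, h1⟩
  · rw [abs_of_pos (pos_of_mul_neg_right h12 h1.le), abs_of_pos h0, hdiff]
    linarith [mul_nonpos_of_nonneg_of_nonpos hx0 h1.le]
  · rw [abs_of_neg (neg_of_mul_neg_right h12 h1.le), abs_of_neg h0, hdiff]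
    linarith [mul_nonneg hx0 h1.le]

theorem abs_sub_add_six_le_of_alternating (hx : IsProductRecurrence b x)
    (hy : IsProductRecurrence b y) (hx0 : ∀ n, 0 ≤ x n) (hy0 : ∀ n, 0 ≤ y n)
    (halt : ∀ n, (x n - y n) * (x (n + 1) - y (n + 1)) < 0) (n : ℕ) :
    |x (n + 6) - y (n + 6)| ≤ y (n + 5) * (y (n + 3) * y (n + 1)) * |x n - y n| := by
  have hstep : ∀ k, |x (k + 2) - y (k + 2)| ≤ y (k + 1) * |x k - y k| := fun k =>
    hx.abs_sub_le_of_alternating hy (hx0 k) (halt k) (halt (k + 1))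
  calc |x (n + 6) - y (n + 6)| ≤ y (n + 5) * |x (n + 4) - y (n + 4)| := hstep (n + 4)
    _ ≤ y (n + 5) * (y (n + 3) * |x (n + 2) - y (n + 2)|) :=
      mul_le_mul_of_nonneg_left (hstep (n + 2)) (hy0 _)
    _ ≤ y (n + 5) * (y (n + 3) * (y (n + 1) * |x n - y n|)) :=
      mul_le_mul_of_nonneg_left (mul_le_mul_of_nonneg_left (hstep n) (hy0 _)) (hy0 _)
    _ = y (n + 5) * (y (n + 3) * y (n + 1)) * |x n - y n| := by ring

end Comparison

section ClusterValues

variable {c : ℝ} {x : ℕ → ℝ}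

theorem exists_mapClusterPt_eq_mul_add (hx : IsProductRecurrence (fun _ => c) x) {K : Set ℝ}
    (hK : IsCompact K) (hxK : ∀ n, x n ∈ K) {L : ℝ} (hL : MapClusterPt L atTop x) :
    ∃ a b d, MapClusterPt a atTop x ∧ MapClusterPt b atTop x ∧ MapClusterPt d atTop x ∧
      L = a * b + c ∧ a = b * d + c := by
  obtain ⟨U, hU, hUL⟩ := mapClusterPt_iff_ultrafilter.1 hL
  have exists_lim : ∀ j : ℕ,
      ∃ a, MapClusterPt a atTop x ∧ Tendsto (fun n => x (n - j)) U (𝓝 a) := fun j => by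
    obtain ⟨a, -, ha⟩ := hK.ultrafilter_le_nhds (U.map fun n => x (n - j))
      (tendsto_principal.2 (.of_forall fun n => hxK (n - j)))
    have hlim : Tendsto (fun n => x (n - j)) U (𝓝 a) := ha
    exact ⟨a, .of_comp ((tendsto_sub_atTop_nat j).mono_left hU) hlim.mapClusterPt, hlim⟩
  obtain ⟨a, ha, hUa⟩ := exists_lim 1
  obtain ⟨b, hb, hUb⟩ := exists_lim 2
  obtain ⟨d, hd, hUd⟩ := exists_lim 3
  refine ⟨a, b, d, ha, hb, hd, ?_, ?_⟩
  · refine tendsto_nhds_unique_of_eventuallyEq hUL ((hUa.mul hUb).add_const c) ?_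
    filter_upwards [hU (eventually_ge_atTop 3)] with n hn
    obtain ⟨k, rfl⟩ := Nat.exists_eq_add_of_le' hn
    exact hx (k + 1)
  · refine tendsto_nhds_unique_of_eventuallyEq hUa ((hUb.mul hUd).add_const c) ?_
    filter_upwards [hU (eventually_ge_atTop 3)] with n hn
    obtain ⟨k, rfl⟩ := Nat.exists_eq_add_of_le' hn
    exact hx k

end ClusterValues

end IsProductRecurrence

section PredecessorClosed

variable {c m M : ℝ} {C : Set ℝ}

theorem isGreatest_neg_of_forall_eq_mul_add (hc : c < 0) (hm : IsLeast C m)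
    (hM : IsGreatest C M) (hm1 : -1 < m) (hM1 : M < 1)
    (hC : ∀ L ∈ C, ∃ a ∈ C, ∃ b ∈ C, L = a * b + c) : M < 0 := by
  by_contra! hM0
  have mem_Icc : ∀ a ∈ C, a ∈ Icc m M := fun a ha => ⟨hm.2 ha, hM.2 ha⟩
  obtain ⟨a, ha, b, hb, hMab⟩ := hC M hM.1
  obtain ⟨a', ha', b', hb', hmab⟩ := hC m hm.1
  have hMM : M ^ 2 ≤ M := by nlinarith
  have hm0 : m ≤ 0 := by
    by_contra! hm0
    have hab : a * b ≤ M * M := mul_le_mul (hM.2 ha) (hM.2 hb) (hm0.le.trans (hm.2 hb)) hM0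
    linarith
  have hM_le : M ≤ m ^ 2 + c := by
    rcases le_max_iff.1 (mul_mem_Icc_of_mem_Icc hm0 hM0 (mem_Icc a ha) (mem_Icc b hb)).2
      with h | h <;> linarith
  have hm_ge : m * M + c ≤ m := by
    linarith [(mul_mem_Icc_of_mem_Icc hm0 hM0 (mem_Icc a' ha') (mem_Icc b' hb')).1]
  -- Inserting `hM_le` into `hm_ge` gives `(1 + m) * (m² - m + c) ≤ 0`.
  have hsq : m ^ 2 - m ≤ -c := by
    refine le_of_mul_le_mul_left ?_ (show 0 < 1 + m by linarith)
    nlinarith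
  have hm_zero : m = 0 := by linarith
  rw [hm_zero] at hM_le
  linarith

theorem eq_of_isLeast_of_isGreatest_of_forall_eq_mul_add (hm : IsLeast C m)
    (hM : IsGreatest C M) (hm1 : -1 < m) (hM0 : M < 0)
    (hC : ∀ L ∈ C, ∃ a ∈ C, ∃ b ∈ C, ∃ d ∈ C, L = a * b + c ∧ a = b * d + c) : m = M := by
  obtain ⟨a, -, b, hb, d, hd, hmab, habd⟩ := hC m hm.1
  obtain ⟨a', -, b', hb', d', hd', hMab, habd'⟩ := hC M hM.1
  have hbM' := hM.2 hb'
  have hmb' := hm.2 hb'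
  have hbM := hM.2 hb
  have hmb := hm.2 hb
  -- Eliminating `a` gives `m = b² * d + c * (1 + b)`; now bound `d` and divide by `1 + b > 0`.
  have hc_le : c ≤ m * (1 - M) := by
    have hdiv : c ≤ m * (1 - b) := by
      refine le_of_mul_le_mul_left ?_ (show 0 < 1 + b by linarith)
      nlinarith [mul_le_mul_of_nonneg_left (hm.2 hd) (sq_nonneg b)]
    nlinarith
  have hle_c : M * (1 - m) ≤ c := by
    have hdiv : M * (1 - b') ≤ c := by
      refine le_of_mul_le_mul_left ?_ (show 0 < 1 + b' by linarith)
      nlinarith [mul_le_mul_of_nonneg_left (hM.2 hd') (sq_nonneg b')]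
    nlinarith
  exact le_antisymm (hm.2 hM.1) (by linarith)

end PredecessorClosed

section TrappedOrbits

variable {c : ℝ} {x : ℕ → ℝ}

theorem IsProductRecurrence.tendsto_a1_of_forall_mem_Icc (hc : c < 0)
    (hx : IsProductRecurrence (fun _ => c) x) {A B : ℝ} (hA : -1 < A) (hB : B < 1)
    (hxAB : ∀ n, x n ∈ Icc A B) : Tendsto x atTop (𝓝 (a1 c)) := by
  let C : Set ℝ := {L | MapClusterPt L atTop x}
  have hC_sub : C ⊆ Icc A B := fun L hL => isClosed_Icc.mem_of_mapClusterPt hL (.of_forall hxAB)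
  have hC_compact : IsCompact C :=
    isCompact_Icc.of_isClosed_subset isClosed_setOfPred_clusterPt hC_sub
  have hC_nonempty : C.Nonempty :=
    (isCompact_Icc.exists_mapClusterPt (tendsto_principal.2 (.of_forall hxAB))).imp fun _ h => h.2
  obtain ⟨m, hm⟩ := hC_compact.exists_isLeast hC_nonempty
  obtain ⟨M, hM⟩ := hC_compact.exists_isGreatest hC_nonempty
  have hpred : ∀ L ∈ C, ∃ a ∈ C, ∃ b ∈ C, ∃ d ∈ C, L = a * b + c ∧ a = b * d + c := fun L hL =>
    let ⟨a, b, d, ha, hb, hd, hLab, habd⟩ := hx.exists_mapClusterPt_eq_mul_add isCompact_Icc hxAB hL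
    ⟨a, ha, b, hb, d, hd, hLab, habd⟩
  have hm1 : -1 < m := hA.trans_le (hC_sub hm.1).1
  have hM0 : M < 0 :=
    isGreatest_neg_of_forall_eq_mul_add hc hm hM hm1 ((hC_sub hM.1).2.trans_lt hB) fun L hL =>
      let ⟨a, ha, b, hb, _, _, hLab, _⟩ := hpred L hL
      ⟨a, ha, b, hb, hLab⟩
  obtain rfl : m = M := eq_of_isLeast_of_isGreatest_of_forall_eq_mul_add hm hM hm1 hM0 hpred
  have eq_m : ∀ L ∈ C, L = m := fun L hL => le_antisymm (hM.2 hL) (hm.2 hL)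
  obtain ⟨a, ha, b, hb, _, _, hmab, _⟩ := hpred m hm.1
  rw [eq_m a ha, eq_m b hb] at hmab
  rw [← eq_a1_of_neg hM0 hmab.symm]
  exact isCompact_Icc.tendsto_nhds_of_unique_mapClusterPt (.of_forall hxAB) fun L _ => eq_m L

-- These invariant intervals exhaust `(-1, 1 + c)` as `s → 1`.
theorem mul_add_mem_Icc_neg_sq_add {s u v : ℝ} (hc : c ≤ 0) (hs1 : s ≤ 1)
    (h0 : 0 ∈ Icc (-s) (s ^ 2 + c)) (hu : u ∈ Icc (-s) (s ^ 2 + c))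
    (hv : v ∈ Icc (-s) (s ^ 2 + c)) : u * v + c ∈ Icc (-s) (s ^ 2 + c) := by
  obtain ⟨hlo, hhi⟩ := mul_mem_Icc_of_mem_Icc h0.1 h0.2 hu hv
  have hs0 : 0 ≤ s := neg_nonpos.1 h0.1
  constructor
  · have hfactor : 0 ≤ (1 - s) * (s + (s ^ 2 + c)) :=
      mul_nonneg (by linarith) (add_nonneg hs0 h0.2)
    linarith
  · have hle : s ^ 2 + c ≤ s := by nlinarith
    have hmax : max ((-s) ^ 2) ((s ^ 2 + c) ^ 2) ≤ s ^ 2 :=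
      max_le (neg_sq s).le (pow_le_pow_left₀ h0.2 hle 2)
    linarith

theorem eventually_mem_Icc_neg_sq_add {u : ℝ} (hu : u ∈ Ioo (-1) (1 + c)) :
    ∀ᶠ s : ℝ in 𝓝[<] 1, u ∈ Icc (-s) (s ^ 2 + c) := by
  have hlo : ∀ᶠ s : ℝ in 𝓝 1, -s < u := continuous_neg.continuousAt.eventually_lt_const hu.1
  have hhi : ∀ᶠ s : ℝ in 𝓝 1, u < s ^ 2 + c :=
    Tendsto.eventually_const_lt (by simpa using hu.2) (Continuous.tendsto (by fun_prop) 1)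
  filter_upwards [nhdsWithin_le_nhds (hlo.and hhi)] with s hs using ⟨hs.1.le, hs.2.le⟩

theorem IsProductRecurrence.tendsto_a1_of_mem_Ioo (hc1 : -1 < c) (hc2 : c < 0)
    (hx : IsProductRecurrence (fun _ => c) x) (h0 : x 0 ∈ Ioo (-1) (1 + c))
    (h1 : x 1 ∈ Ioo (-1) (1 + c)) : Tendsto x atTop (𝓝 (a1 c)) := by
  have hzero : (0 : ℝ) ∈ Ioo (-1) (1 + c) := ⟨by norm_num, by linarith⟩
  obtain ⟨s, hs1 : s < 1, hs0, hsx0, hsx1⟩ := (eventually_mem_nhdsWithin.and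
    ((eventually_mem_Icc_neg_sq_add hzero).and
      ((eventually_mem_Icc_neg_sq_add h0).and (eventually_mem_Icc_neg_sq_add h1)))).exists
  have hmem : ∀ n, x n ∈ Icc (-s) (s ^ 2 + c) := hx.forall_mem
    (fun u hu v hv => mul_add_mem_Icc_neg_sq_add hc2.le hs1.le hs0 hu hv) hsx0 hsx1
  exact hx.tendsto_a1_of_forall_mem_Icc hc2 (by linarith) (by nlinarith [hs0.1]) hmem

theorem mul_add_mem_Ioo {u v : ℝ} (hc1 : -1 < c) (hc2 : c < 0) (hu : u ∈ Ioo (-1) (1 + c))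
    (hv : v ∈ Icc (-1) (1 + c)) : u * v + c ∈ Ioo (-1) (1 + c) := by
  obtain ⟨hu₁, hu₂⟩ := hu
  obtain ⟨hv₁, hv₂⟩ := hv
  constructor
  · suffices -(u * v) < 1 + c by linarith
    rcases le_total 0 u with _ | _ <;> rcases le_total 0 v with _ | _ <;> nlinarith
  · suffices u * v < 1 by linarith
    rcases le_total 0 u with _ | _ <;> rcases le_total 0 v with _ | _ <;> nlinarith

end TrappedOrbits

section NonnegativeOrbits

variable {a c B : ℝ} {x : ℕ → ℝ}

theorem IsProductRecurrence.tendsto_of_eventually_same_side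
    (hx : IsProductRecurrence (fun _ => c) x) (ha : 1 < a) (hfix : a * a + c = a)
    (hx0 : ∀ n, 0 ≤ x n) (hB : ∀ n, |x n| ≤ B)
    (hside : ∀ᶠ n in atTop, 0 ≤ (x n - a) * (x (n + 1) - a)) : Tendsto x atTop (𝓝 a) := by
  obtain ⟨N, hN⟩ := eventually_atTop.1 hside
  have hgrow : ∀ n ≥ N, a * |x (n + 1) - a| ≤ |x (n + 2) - a| := fun n hn => by
    have hdiff : x (n + 2) - a = a * (x (n + 1) - a) + x (n + 1) * (x n - a) := by
      rw [hx n]; linear_combination hfix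
    rcases mul_nonneg_iff.1 (hN n hn) with ⟨h0, h1⟩ | ⟨h0, h1⟩
    · rw [abs_of_nonneg h1]
      linarith [le_abs_self (x (n + 2) - a), mul_nonneg (hx0 (n + 1)) h0]
    · rw [abs_of_nonpos h1]
      linarith [neg_le_abs (x (n + 2) - a), mul_nonpos_of_nonneg_of_nonpos (hx0 (n + 1)) h0]
  refine tendsto_const_nhds.congr' (eventually_atTop.2 ⟨N + 1, fun n hn => ?_⟩)
  obtain ⟨k, rfl⟩ := Nat.exists_eq_add_of_le' hn
  have hzero : |x (k + N + 1) - a| ≤ 0 :=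
    nonpos_of_mul_le_succ_of_le (s := fun j => |x (k + N + j + 1) - a|) (B := B + |a|) ha
      (fun j => hgrow (k + N + j) (by omega))
      (fun j => (abs_sub _ _).trans (by gcongr; exact hB _))
  exact (sub_eq_zero.1 (abs_nonpos_iff.1 hzero)).symm

theorem IsProductRecurrence.eventually_even_le_sq (hx : IsProductRecurrence (fun _ => c) x)
    (ha : 1 < a) (hfix : a * a + c = a) (heven : ∀ k, a < x (2 * k))
    (hodd : ∀ k, x (2 * k + 1) < a) : ∀ᶠ k in atTop, x (2 * k) ≤ a ^ 2 := by
  have hc : c < 0 := by nlinarith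
  refine eventually_le_of_succ_le_max_sub (neg_pos.2 hc) fun k => le_max_iff.2 ?_
  have hrec₂ : x (2 * (k + 1)) = x (2 * k + 1) * x (2 * k) + c := hx (2 * k)
  have hrec₃ : x (2 * (k + 1) + 1) = x (2 * (k + 1)) * x (2 * k + 1) + c := hx (2 * k + 1)
  have hodd' := hodd (k + 1)
  have heven' := heven (k + 1)
  rcases le_total (x (2 * k + 1)) 1 with hle | hge
  · right
    nlinarith [heven k]
  · left
    -- `x (2 * k + 2) ≤ x (2 * k + 2) * x (2 * k + 1) = x (2 * k + 3) - c < a - c = a²`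
    nlinarith

theorem IsProductRecurrence.one_add_mul_sub_odd_le (hx : IsProductRecurrence (fun _ => c) x)
    (ha : 0 < a) (hfix : a * a + c = a) (heven : ∀ k, a < x (2 * k))
    (hodd : ∀ k, x (2 * k + 1) < a) (k : ℕ) :
    (1 + a) * (a - x (2 * (k + 1) + 1)) ≤ x (2 * (k + 1)) * (a - x (2 * k + 1)) := by
  have hrec₃ : x (2 * (k + 1) + 1) = x (2 * (k + 1)) * x (2 * k + 1) + c := hx (2 * k + 1)
  have hrec₄ : x (2 * (k + 2)) = x (2 * (k + 1) + 1) * x (2 * (k + 1)) + c := hx (2 * (k + 1))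
  have hdist : a - x (2 * (k + 1) + 1) ≤ x (2 * (k + 1)) - a := by
    have hodd' := hodd (k + 1)
    have heven₁ := heven (k + 1)
    have heven₂ := heven (k + 2)
    by_contra! hlt
    nlinarith
  have hsplit : a - x (2 * (k + 1) + 1) =
      x (2 * (k + 1)) * (a - x (2 * k + 1)) - a * (x (2 * (k + 1)) - a) := by
    rw [hrec₃]; linear_combination -hfix
  linarith [hsplit, mul_le_mul_of_nonneg_left hdist ha.le]

theorem IsProductRecurrence.tendsto_of_even_gt_of_odd_lt
    (hx : IsProductRecurrence (fun _ => c) x) (hc : -1 < c) (ha : 1 < a)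
    (hfix : a * a + c = a) (heven : ∀ k, a < x (2 * k)) (hodd : ∀ k, x (2 * k + 1) < a) :
    Tendsto x atTop (𝓝 a) := by
  have hbound : ∀ᶠ k in atTop, x (2 * (k + 1)) ≤ a ^ 2 :=
    (tendsto_add_atTop_nat 1).eventually (hx.eventually_even_le_sq ha hfix heven hodd)
  have hodd_zero : Tendsto (fun k => a - x (2 * k + 1)) atTop (𝓝 0) := by
    have hratio : a ^ 2 / (1 + a) < 1 := (div_lt_one (by linarith)).2 (by linarith)
    refine (summable_of_ratio_norm_eventually_le hratio ?_).tendsto_atTop_zero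
    filter_upwards [hbound] with k hk
    rw [Real.norm_of_nonneg (sub_pos.2 (hodd _)).le, Real.norm_of_nonneg (sub_pos.2 (hodd _)).le,
      div_mul_eq_mul_div, le_div_iff₀' (by linarith)]
    exact (hx.one_add_mul_sub_odd_le (by linarith) hfix heven hodd k).trans
      (mul_le_mul_of_nonneg_right hk (sub_pos.2 (hodd k)).le)
  have heven_zero : Tendsto (fun k => x (2 * (k + 1)) - a) atTop (𝓝 0) := by
    refine squeeze_zero' (.of_forall fun k => (sub_pos.2 (heven _)).le) ?_
      (by simpa using hodd_zero.const_mul a)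
    filter_upwards [hbound] with k hk
    have hrec₃ : x (2 * (k + 1) + 1) = x (2 * (k + 1)) * x (2 * k + 1) + c := hx (2 * k + 1)
    have hk' := mul_le_mul_of_nonneg_right hk (sub_pos.2 (hodd k)).le
    refine le_of_mul_le_mul_left ?_ (show 0 < a by linarith)
    linarith [hodd (k + 1)]
  have htendsto_odd : Tendsto (fun k => x (2 * k + 1)) atTop (𝓝 a) := by
    simpa using hodd_zero.const_sub a
  have htendsto_even : Tendsto (fun k => x (2 * k)) atTop (𝓝 a) :=
    (tendsto_add_atTop_iff_nat 1).1 (by simpa using heven_zero.add_const a)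
  refine tendsto_of_forall_residue two_ne_zero fun j hj => ?_
  interval_cases j
  exacts [htendsto_even, htendsto_odd]

theorem even_pos_and_odd_neg_of_alternating {e : ℕ → ℝ} (halt : ∀ n, e n * e (n + 1) < 0)
    (h0 : 0 < e 0) (k : ℕ) : 0 < e (2 * k) ∧ e (2 * k + 1) < 0 := by
  have hpos : 0 < e (2 * k) := by
    induction k with
    | zero => exact h0
    | succ k ih =>
      exact pos_of_mul_neg_right (halt (2 * k + 1)) (neg_of_mul_neg_right (halt _) ih.le).le
  exact ⟨hpos, neg_of_mul_neg_right (halt _) hpos.le⟩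

theorem IsProductRecurrence.tendsto_of_alternating (hx : IsProductRecurrence (fun _ => c) x)
    (hc : -1 < c) (ha : 1 < a) (hfix : a * a + c = a)
    (halt : ∀ n, (x n - a) * (x (n + 1) - a) < 0) : Tendsto x atTop (𝓝 a) := by
  have tendsto_of_gt : ∀ y : ℕ → ℝ, IsProductRecurrence (fun _ => c) y →
      (∀ n, (y n - a) * (y (n + 1) - a) < 0) → a < y 0 → Tendsto y atTop (𝓝 a) :=
    fun y hy hyalt hy0 =>
      have hparity := even_pos_and_odd_neg_of_alternating (e := fun n => y n - a) hyalt
        (sub_pos.2 hy0)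
      hy.tendsto_of_even_gt_of_odd_lt hc ha hfix (fun k => sub_pos.1 (hparity k).1)
        (fun k => sub_neg.1 (hparity k).2)
  rcases mul_neg_iff.1 (halt 0) with ⟨h0, -⟩ | ⟨-, h1⟩
  · exact tendsto_of_gt x hx halt (sub_pos.1 h0)
  · exact (tendsto_add_atTop_iff_nat 1).1
      (tendsto_of_gt _ (hx.shift 1) (fun n => halt (n + 1)) (sub_pos.1 h1))

theorem IsProductRecurrence.tendsto_a2_of_nonneg (hx : IsProductRecurrence (fun _ => c) x)
    (hc1 : -1 < c) (hc2 : c < 0) (hx0 : ∀ n, 0 ≤ x n) (hB : ∀ n, |x n| ≤ B) :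
    Tendsto x atTop (𝓝 (a2 c)) := by
  have ha := one_lt_a2 hc2
  have hfix := a2_mul_self_add hc2
  have hconst : IsProductRecurrence (fun _ => c) (fun _ => a2 c) := fun _ => hfix.symm
  have of_same_side := hx.tendsto_of_eventually_same_side ha hfix hx0 hB
  rcases hx.eventually_le_or_ge_or_alternating hconst hx0 (fun _ => by linarith) with
    hle | hge | halt
  · refine of_same_side ?_
    filter_upwards [hle, (tendsto_add_atTop_nat 1).eventually hle] with n h0 h1
    exact mul_nonneg_of_nonpos_of_nonpos (sub_nonpos.2 h0) (sub_nonpos.2 h1)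
  · refine of_same_side ?_
    filter_upwards [hge, (tendsto_add_atTop_nat 1).eventually hge] with n h0 h1
    exact mul_nonneg (sub_nonneg.2 h0) (sub_nonneg.2 h1)
  · exact hx.tendsto_of_alternating hc1 ha hfix halt

end NonnegativeOrbits

section ThreeCycle

/-- The second coordinates of the orbit of `p = (-1, -1)`, that is `-1, -1, 1 + c` repeated with
period three. `threeCycle 0` is the sign pattern of `threeCycle c` for `c > -1`. -/
noncomputable def threeCycle (c : ℝ) (n : ℕ) : ℝ := if n % 3 = 2 then 1 + c else -1

variable (c : ℝ) (n : ℕ)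

theorem threeCycle_add_three_mul (k : ℕ) : threeCycle c (n + 3 * k) = threeCycle c n := by
  simp [threeCycle]

theorem threeCycle_three_mul : threeCycle c (3 * n) = -1 := by
  simp [threeCycle]

theorem threeCycle_three_mul_add_one : threeCycle c (3 * n + 1) = -1 := by
  simp [threeCycle]

theorem threeCycle_three_mul_add_two : threeCycle c (3 * n + 2) = 1 + c := by
  simp [threeCycle]

theorem threeCycle_eq_or : threeCycle c n = 1 + c ∨ threeCycle c n = -1 :=
  ite_eq_or_eq _ _ _

theorem abs_threeCycle_le : |threeCycle c n| ≤ max |1 + c| 1 := by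
  rcases threeCycle_eq_or c n with h | h <;> simp [h]

theorem isProductRecurrence_threeCycle : IsProductRecurrence (fun _ => c) (threeCycle c) :=
  fun n => by
    have hlt := Nat.mod_lt n three_pos
    interval_cases h : n % 3 <;> simp [threeCycle, Nat.add_mod, h]

theorem abs_threeCycle_zero : |threeCycle 0 n| = 1 := by
  rcases threeCycle_eq_or 0 n with h | h <;> simp [h]

theorem threeCycle_zero_mul_threeCycle :
    threeCycle 0 n * threeCycle c n = if n % 3 = 2 then 1 + c else 1 := by
  unfold threeCycle
  split_ifs <;> ring

theorem threeCycle_zero_mul_threeCycle_nonneg {c : ℝ} (hc : -1 ≤ c) (n : ℕ) :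
    0 ≤ threeCycle 0 n * threeCycle c n := by
  rw [threeCycle_zero_mul_threeCycle]
  split_ifs <;> linarith

end ThreeCycle

/-- The solution `x` of the recurrence approaches one of the fixed points or one of the three
phases of the 3-cycle. -/
def IsAsymptoticToPeriodic (c : ℝ) (x : ℕ → ℝ) : Prop :=
  Tendsto x atTop (𝓝 (a1 c)) ∨ Tendsto x atTop (𝓝 (a2 c)) ∨
    ∃ i, Tendsto (fun n => x n - threeCycle c (n + i)) atTop (𝓝 0)

section Periodic

variable {c B : ℝ} {x : ℕ → ℝ}

theorem IsAsymptoticToPeriodic.of_shift (N : ℕ)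
    (h : IsAsymptoticToPeriodic c (fun n => x (n + N))) : IsAsymptoticToPeriodic c x := by
  rcases h with h | h | ⟨i, h⟩
  · exact .inl ((tendsto_add_atTop_iff_nat N).1 h)
  · exact .inr (.inl ((tendsto_add_atTop_iff_nat N).1 h))
  · refine .inr (.inr ⟨i + 2 * N, (tendsto_add_atTop_iff_nat N).1 ?_⟩)
    convert h using 3 with n
    rw [← threeCycle_add_three_mul c (n + i) N]
    congr 1
    ring

theorem mul_add_mem_Ioo_or_eq_threeCycle {u v : ℝ} (hc1 : -1 < c) (hc2 : c < 0)
    (hu : u ∈ Icc (-1) (1 + c)) (hv : v ∈ Icc (-1) (1 + c)) :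
    v * u + c ∈ Ioo (-1) (1 + c) ∨ ∃ i, u = threeCycle c i ∧ v = threeCycle c (i + 1) := by
  rcases eq_endpoints_or_mem_Ioo_of_mem_Icc hu with rfl | rfl | hu'
  · rcases eq_endpoints_or_mem_Ioo_of_mem_Icc hv with rfl | rfl | hv'
    · exact .inr ⟨0, by simp [threeCycle]⟩
    · exact .inr ⟨1, by simp [threeCycle]⟩
    · exact .inl (mul_add_mem_Ioo hc1 hc2 hv' hu)
  · rcases eq_endpoints_or_mem_Ioo_of_mem_Icc hv with rfl | rfl | hv'
    · exact .inr ⟨2, by simp [threeCycle]⟩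
    · exact .inl ⟨by nlinarith, by nlinarith⟩
    · exact .inl (mul_add_mem_Ioo hc1 hc2 hv' hu)
  · exact .inl (mul_comm u v ▸ mul_add_mem_Ioo hc1 hc2 hu' hv)

theorem IsProductRecurrence.isAsymptoticToPeriodic_of_mem_Icc
    (hx : IsProductRecurrence (fun _ => c) x) (hc1 : -1 < c) (hc2 : c < 0)
    (h0 : x 0 ∈ Icc (-1) (1 + c)) (h1 : x 1 ∈ Icc (-1) (1 + c)) : IsAsymptoticToPeriodic c x := by
  rcases mul_add_mem_Ioo_or_eq_threeCycle hc1 hc2 h0 h1 with h2 | ⟨i, h0i, h1i⟩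
  · rw [← hx 0] at h2
    have h3 : x 3 ∈ Ioo (-1) (1 + c) := hx 1 ▸ mul_add_mem_Ioo hc1 hc2 h2 h1
    exact .of_shift 2 (.inl ((hx.shift 2).tendsto_a1_of_mem_Ioo hc1 hc2 h2 h3))
  · have hcycle := (isProductRecurrence_threeCycle c).shift i
    refine .inr (.inr ⟨i, ?_⟩)
    rw [hx.ext hcycle (by simpa using h0i) (by simpa [add_comm] using h1i)]
    simp

theorem IsProductRecurrence.eq_neg_one_of_forall_le_neg_one
    (hx : IsProductRecurrence (fun _ => c) x) (hc : -1 < c) (hB : ∀ n, |x n| ≤ B)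
    (hle : ∀ j, x (3 * j) ≤ -1 ∧ x (3 * j + 1) ≤ -1) : x 0 = -1 ∧ x 1 = -1 := by
  have hgrow : ∀ j, 2 * (-x (3 * j) - x (3 * j + 1) - 2) ≤
      -x (3 * (j + 1)) - x (3 * (j + 1) + 1) - 2 := fun j => by
    obtain ⟨h0, h1⟩ := hle j
    have hrec₂ : x (3 * j + 2) = x (3 * j + 1) * x (3 * j) + c := hx (3 * j)
    have hrec₃ : x (3 * (j + 1)) = x (3 * j + 2) * x (3 * j + 1) + c := hx (3 * j + 1)
    have hrec₄ : x (3 * (j + 1) + 1) = x (3 * (j + 1)) * x (3 * j + 2) + c := hx (3 * j + 2)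
    have h2 : -x (3 * j) - x (3 * j + 1) - 1 + c ≤ x (3 * j + 2) := by nlinarith
    have h3 : -x (3 * j) - x (3 * j + 1) - 1 ≤ -x (3 * (j + 1)) := by nlinarith
    have h4 : -x (3 * j) - x (3 * j + 1) - 1 ≤ -x (3 * (j + 1) + 1) := by nlinarith
    linarith
  have hsum : -x 0 - x 1 - 2 ≤ 0 :=
    nonpos_of_mul_le_succ_of_le (s := fun j => -x (3 * j) - x (3 * j + 1) - 2)
      (B := B + B - 2) one_lt_two hgrow fun j => by
        linarith [neg_le_abs (x (3 * j)), neg_le_abs (x (3 * j + 1)), hB (3 * j), hB (3 * j + 1)]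
  obtain ⟨h0, h1⟩ : x 0 ≤ -1 ∧ x 1 ≤ -1 := hle 0
  constructor <;> linarith

theorem IsProductRecurrence.tendsto_sub_threeCycle_of_alternating
    (hx : IsProductRecurrence (fun _ => c) x) (hc1 : -1 < c) (hc2 : c < 0)
    (hsign : ∀ n, 0 ≤ threeCycle 0 n * x n)
    (halt : ∀ n, (threeCycle 0 n * x n - threeCycle 0 n * threeCycle c n) *
      (threeCycle 0 (n + 1) * x (n + 1) - threeCycle 0 (n + 1) * threeCycle c (n + 1)) < 0) :
    Tendsto (fun n => x n - threeCycle c n) atTop (𝓝 0) := by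
  have hσ : IsProductRecurrence 0 (threeCycle 0) := isProductRecurrence_threeCycle 0
  have hprod : ∀ n, threeCycle 0 (n + 5) * threeCycle c (n + 5) *
      (threeCycle 0 (n + 3) * threeCycle c (n + 3) *
        (threeCycle 0 (n + 1) * threeCycle c (n + 1))) = 1 + c := fun n => by
    have hlt := Nat.mod_lt n three_pos
    interval_cases h : n % 3 <;> simp [threeCycle_zero_mul_threeCycle, Nat.add_mod, h]
  have hdist : ∀ n, |threeCycle 0 n * x n - threeCycle 0 n * threeCycle c n| =
      |x n - threeCycle c n| := fun n => by
    rw [← mul_sub, abs_mul, abs_threeCycle_zero, one_mul]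
  refine tendsto_zero_of_norm_add_le_mul (p := 6) (q := 1 + c) (by norm_num) (by linarith)
    fun n => ?_
  have hcontract := (hσ.mul hx).abs_sub_add_six_le_of_alternating
    (hσ.mul (isProductRecurrence_threeCycle c)) hsign
    (threeCycle_zero_mul_threeCycle_nonneg hc1.le) halt n
  rwa [hprod, hdist, hdist] at hcontract

theorem IsProductRecurrence.mem_Icc_or_tendsto_sub_threeCycle
    (hx : IsProductRecurrence (fun _ => c) x) (hc1 : -1 < c) (hc2 : c < 0) (hB : ∀ n, |x n| ≤ B)
    (hsign : ∀ n, 0 ≤ threeCycle 0 n * x n) :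
    (∃ n, x n ∈ Icc (-1) (1 + c) ∧ x (n + 1) ∈ Icc (-1) (1 + c)) ∨
      Tendsto (fun n => x n - threeCycle c n) atTop (𝓝 0) := by
  have hσ : IsProductRecurrence 0 (threeCycle 0) := isProductRecurrence_threeCycle 0
  have hy := hσ.mul hx
  have hcycle := hσ.mul (isProductRecurrence_threeCycle c)
  rcases hy.eventually_le_or_ge_or_alternating hcycle hsign
      (threeCycle_zero_mul_threeCycle_nonneg hc1.le) with hle | hge | halt
  · left
    obtain ⟨N, hN⟩ := eventually_atTop.1 hle
    have h0 := hN (3 * N) (by omega)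
    have h1 := hN (3 * N + 1) (by omega)
    have hs0 := hsign (3 * N)
    have hs1 := hsign (3 * N + 1)
    simp only [threeCycle_three_mul, threeCycle_three_mul_add_one] at h0 h1 hs0 hs1
    exact ⟨3 * N, ⟨by linarith, by linarith⟩, by linarith, by linarith⟩
  · left
    obtain ⟨N, hN⟩ := eventually_atTop.1 hge
    have hle : ∀ j, x (3 * j + 3 * N) ≤ -1 ∧ x (3 * j + 1 + 3 * N) ≤ -1 := fun j => by
      have h0 := hN (3 * j + 3 * N) (by omega)
      have h1 := hN (3 * j + 1 + 3 * N) (by omega)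
      simp only [threeCycle_add_three_mul, threeCycle_three_mul,
        threeCycle_three_mul_add_one] at h0 h1
      constructor <;> linarith
    obtain ⟨h0, h1⟩ := (hx.shift (3 * N)).eq_neg_one_of_forall_le_neg_one hc1 (fun _ => hB _) hle
    rw [zero_add] at h0
    rw [add_comm] at h1
    exact ⟨3 * N, by rw [h0, h1]; exact ⟨⟨le_rfl, by linarith⟩, le_rfl, by linarith⟩⟩
  · exact .inr (hx.tendsto_sub_threeCycle_of_alternating hc1 hc2 hsign halt)

end Periodic

section SignPattern

variable {c B : ℝ} {x : ℕ → ℝ}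

theorem mem_Icc_of_le_of_mul_add_neg {u v : ℝ} (hc1 : -1 < c) (hc2 : c < 0) (hu : u ≤ c)
    (hv : v ≤ c) (huv : u * v + c < 0) : u ∈ Icc (-1) (1 + c) := by
  refine ⟨?_, by linarith⟩
  by_contra! hlt
  nlinarith

theorem IsProductRecurrence.neg_neg_nonneg_of_neg_of_nonneg
    (hx : IsProductRecurrence (fun _ => c) x) (hc1 : -1 < c) (hc2 : c < 0) {n : ℕ}
    (hbox : ¬(x (n + 2) ∈ Icc (-1) (1 + c) ∧ x (n + 3) ∈ Icc (-1) (1 + c)))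
    (h0 : x n < 0) (h1 : 0 ≤ x (n + 1)) : x (n + 2) < 0 ∧ x (n + 3) < 0 ∧ 0 ≤ x (n + 4) := by
  have hrec₄ : x (n + 4) = x (n + 3) * x (n + 2) + c := hx (n + 2)
  have h2 : x (n + 2) ≤ c := by
    rw [hx n]
    linarith [mul_nonpos_of_nonneg_of_nonpos h1 h0.le]
  have h3 : x (n + 3) ≤ c := by
    rw [hx (n + 1)]
    linarith [mul_nonpos_of_nonpos_of_nonneg (h2.trans hc2.le) h1]
  refine ⟨by linarith, by linarith, not_lt.1 fun h4 => hbox ⟨?_, ?_⟩⟩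
  · exact mem_Icc_of_le_of_mul_add_neg hc1 hc2 h2 h3 (by linarith)
  · exact mem_Icc_of_le_of_mul_add_neg hc1 hc2 h3 h2 (by linarith)

theorem IsProductRecurrence.exists_neg_and_nonneg_succ
    (hx : IsProductRecurrence (fun _ => c) x) (hc : -1 < c)
    (hbox : ∀ n, ¬(x n ∈ Icc (-1) (1 + c) ∧ x (n + 1) ∈ Icc (-1) (1 + c)))
    (hneg : ∃ n, x n < 0) : ∃ n, x n < 0 ∧ 0 ≤ x (n + 1) := by
  by_contra! hsucc
  obtain ⟨m, hm⟩ := hneg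
  have hneg_add : ∀ k, x (m + k) < 0 := fun k => by
    induction k with
    | zero => exact hm
    | succ k ih => exact hsucc _ ih
  have mem_Icc : ∀ k, x (m + k + 2) ∈ Icc (-1) (1 + c) := fun k => by
    have hpos := mul_pos_of_neg_of_neg (hneg_add (k + 1)) (hneg_add k)
    have hrec : x (m + k + 2) = x (m + (k + 1)) * x (m + k) + c := hx (m + k)
    exact ⟨by linarith, by linarith [show x (m + k + 2) < 0 from hneg_add (k + 2)]⟩
  exact hbox (m + 2) ⟨mem_Icc 0, mem_Icc 1⟩

theorem IsProductRecurrence.exists_forall_threeCycle_mul_nonneg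
    (hx : IsProductRecurrence (fun _ => c) x) (hc1 : -1 < c) (hc2 : c < 0)
    (hbox : ∀ n, ¬(x n ∈ Icc (-1) (1 + c) ∧ x (n + 1) ∈ Icc (-1) (1 + c)))
    (hneg : ∃ n, x n < 0) : ∃ N, ∀ n, 0 ≤ threeCycle 0 n * x (n + N) := by
  obtain ⟨w, hw⟩ := hx.exists_neg_and_nonneg_succ hc1 hbox hneg
  have hstep : ∀ n, x n < 0 ∧ 0 ≤ x (n + 1) → x (n + 2) < 0 ∧ x (n + 3) < 0 ∧ 0 ≤ x (n + 4) :=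
    fun n hn => hx.neg_neg_nonneg_of_neg_of_nonneg hc1 hc2 (hbox _) hn.1 hn.2
  have hperiod : ∀ j, x (3 * j + w) < 0 ∧ 0 ≤ x (3 * j + w + 1) := fun j => by
    induction j with
    | zero => simpa using hw
    | succ j ih =>
      rw [show 3 * (j + 1) + w = 3 * j + w + 3 by ring]
      exact (hstep _ ih).2
  refine ⟨w + 2, fun n => ?_⟩
  obtain ⟨j, hj⟩ : ∃ j, n = 3 * j ∨ n = 3 * j + 1 ∨ n = 3 * j + 2 := ⟨n / 3, by omega⟩
  obtain ⟨h2, h3, h4⟩ := hstep _ (hperiod j)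
  rcases hj with rfl | rfl | rfl
  · rw [threeCycle_three_mul, ← add_assoc]
    linarith
  · rw [threeCycle_three_mul_add_one, show 3 * j + 1 + (w + 2) = 3 * j + w + 3 by ring]
    linarith
  · rw [threeCycle_three_mul_add_two, show 3 * j + 2 + (w + 2) = 3 * j + w + 4 by ring]
    linarith

theorem IsProductRecurrence.isAsymptoticToPeriodic (hx : IsProductRecurrence (fun _ => c) x)
    (hc1 : -1 < c) (hc2 : c < 0) (hB : ∀ n, |x n| ≤ B) : IsAsymptoticToPeriodic c x := by
  by_cases hbox : ∃ n, x n ∈ Icc (-1) (1 + c) ∧ x (n + 1) ∈ Icc (-1) (1 + c)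
  · obtain ⟨n, h0, h1⟩ := hbox
    exact .of_shift n ((hx.shift n).isAsymptoticToPeriodic_of_mem_Icc hc1 hc2
      (by simpa using h0) (by simpa [add_comm] using h1))
  by_cases hneg : ∃ n, x n < 0
  · obtain ⟨N, hsign⟩ :=
      hx.exists_forall_threeCycle_mul_nonneg hc1 hc2 (not_exists.1 hbox) hneg
    rcases (hx.shift N).mem_Icc_or_tendsto_sub_threeCycle hc1 hc2 (fun _ => hB _) hsign with
      ⟨n, hn⟩ | hlim
    · exact absurd ⟨n + N, by simpa only [add_right_comm _ 1] using hn⟩ hbox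
    · exact .of_shift N (.inr (.inr ⟨0, hlim⟩))
  · exact .inr (.inl (hx.tendsto_a2_of_nonneg hc1 hc2 (by simpa using hneg) hB))

end SignPattern

section Orbits

variable {c : ℝ} {x y : ℕ → ℝ}

theorem exists_isProductRecurrence_eq (c : ℝ) (z : ℝ × ℝ) :
    ∃ x, IsProductRecurrence (fun _ => c) x ∧ z = (x 1, x 0) :=
  ⟨fun n => ((fc c)^[n] z).2, fun n => by simp only [Function.iterate_succ_apply', fc], rfl⟩

namespace IsProductRecurrence

theorem iterate_fc (hx : IsProductRecurrence (fun _ => c) x) (n : ℕ) :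
    (fc c)^[n] (x 1, x 0) = (x (n + 1), x n) := by
  induction n with
  | zero => rfl
  | succ n ih => rw [Function.iterate_succ_apply', ih, fc, hx n]

theorem exists_norm_iterate_le_iff (hx : IsProductRecurrence (fun _ => c) x) :
    (∃ M : ℝ, ∀ n, ‖(fc c)^[n] (x 1, x 0)‖ ≤ M) ↔ ∃ B, ∀ n, |x n| ≤ B := by
  simp only [hx.iterate_fc, Prod.norm_def, max_le_iff, Real.norm_eq_abs]
  exact exists_congr fun M => ⟨fun h n => (h n).2, fun h n => ⟨h _, h _⟩⟩

theorem tendsto_iterate_iff (hx : IsProductRecurrence (fun _ => c) x) {l : ℝ} :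
    Tendsto (fun n => (fc c)^[n] (x 1, x 0)) atTop (𝓝 (l, l)) ↔ Tendsto x atTop (𝓝 l) := by
  simp only [hx.iterate_fc, Prod.tendsto_iff, tendsto_add_atTop_iff_nat, and_self]

theorem tendsto_norm_iterate_sub_iff (hx : IsProductRecurrence (fun _ => c) x)
    (hy : IsProductRecurrence (fun _ => c) y) :
    Tendsto (fun n => ‖(fc c)^[n] (x 1, x 0) - (fc c)^[n] (y 1, y 0)‖) atTop (𝓝 0) ↔
      Tendsto (fun n => x n - y n) atTop (𝓝 0) := by
  simp only [hx.iterate_fc, hy.iterate_fc]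
  rw [← tendsto_zero_iff_norm_tendsto_zero, Prod.zero_eq_mk, Prod.tendsto_iff]
  exact and_iff_right_of_imp fun h => (tendsto_add_atTop_iff_nat 1).2 h

theorem tendsto_norm_iterate_sub_threeCycle_iff (hx : IsProductRecurrence (fun _ => c) x)
    (i : ℕ) :
    Tendsto (fun n => ‖(fc c)^[n] (x 1, x 0) - (fc c)^[n] (threeCycle c (i + 1), threeCycle c i)‖)
      atTop (𝓝 0) ↔ Tendsto (fun n => x n - threeCycle c (n + i)) atTop (𝓝 0) := by
  simpa only [zero_add, add_comm 1] using
    hx.tendsto_norm_iterate_sub_iff ((isProductRecurrence_threeCycle c).shift i)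

end IsProductRecurrence

theorem IsAsymptoticToPeriodic.exists_abs_le (h : IsAsymptoticToPeriodic c x) :
    ∃ B, ∀ n, |x n| ≤ B := by
  rcases h with h | h | ⟨i, h⟩
  · exact exists_abs_le_of_tendsto h
  · exact exists_abs_le_of_tendsto h
  · obtain ⟨B, hB⟩ := exists_abs_le_of_tendsto h
    refine ⟨B + max |1 + c| 1, fun n => ?_⟩
    calc |x n| = |x n - threeCycle c (n + i) + threeCycle c (n + i)| := by rw [sub_add_cancel]
      _ ≤ |x n - threeCycle c (n + i)| + |threeCycle c (n + i)| := abs_add_le _ _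
      _ ≤ B + max |1 + c| 1 := add_le_add (hB n) (abs_threeCycle_le c _)

theorem IsProductRecurrence.exists_abs_le_iff (hx : IsProductRecurrence (fun _ => c) x)
    (hc1 : -1 < c) (hc2 : c < 0) : (∃ B, ∀ n, |x n| ≤ B) ↔ IsAsymptoticToPeriodic c x :=
  ⟨fun ⟨_, hB⟩ => hx.isAsymptoticToPeriodic hc1 hc2 hB, fun h => h.exists_abs_le⟩

theorem exists_tendsto_sub_threeCycle_iff :
    (∃ i, Tendsto (fun n => x n - threeCycle c (n + i)) atTop (𝓝 0)) ↔
      Tendsto (fun n => x n - threeCycle c (n + 0)) atTop (𝓝 0) ∨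
      Tendsto (fun n => x n - threeCycle c (n + 1)) atTop (𝓝 0) ∨
      Tendsto (fun n => x n - threeCycle c (n + 2)) atTop (𝓝 0) := by
  constructor
  · rintro ⟨i, hi⟩
    obtain ⟨k, rfl | rfl | rfl⟩ : ∃ k, i = 3 * k ∨ i = 1 + 3 * k ∨ i = 2 + 3 * k :=
      ⟨i / 3, by omega⟩
    all_goals simp only [← add_assoc, threeCycle_add_three_mul] at hi
    exacts [.inl hi, .inr (.inl hi), .inr (.inr hi)]
  · rintro (h | h | h)
    exacts [⟨0, h⟩, ⟨1, h⟩, ⟨2, h⟩]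

end Orbits

theorem stmt0 (c : ℝ) (hc1 : -1 < c) (hc2 : c < 0) :
    {z : ℝ × ℝ | ∃ M : ℝ, ∀ n : ℕ, ‖(fc c)^[n] z‖ ≤ M} =
      {z : ℝ × ℝ | Tendsto (fun n => (fc c)^[n] z) atTop (𝓝 (a1 c, a1 c))} ∪
      {z : ℝ × ℝ | Tendsto (fun n => (fc c)^[n] z) atTop (𝓝 (a2 c, a2 c))} ∪
      {z : ℝ × ℝ | Tendsto (fun n => ‖(fc c)^[n] z - (fc c)^[n] (-1, -1)‖) atTop (𝓝 0)} ∪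
      {z : ℝ × ℝ | Tendsto (fun n => ‖(fc c)^[n] z - (fc c)^[n] (1 + c, -1)‖) atTop (𝓝 0)} ∪
      {z : ℝ × ℝ | Tendsto (fun n => ‖(fc c)^[n] z - (fc c)^[n] (-1, 1 + c)‖) atTop (𝓝 0)} := by
  have hp₀ : ((-1, -1) : ℝ × ℝ) = (threeCycle c (0 + 1), threeCycle c 0) := by simp [threeCycle]
  have hp₁ : ((1 + c, -1) : ℝ × ℝ) = (threeCycle c (1 + 1), threeCycle c 1) := by simp [threeCycle]
  have hp₂ : ((-1, 1 + c) : ℝ × ℝ) = (threeCycle c (2 + 1), threeCycle c 2) := by simp [threeCycle]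
  ext z
  obtain ⟨x, hx, rfl⟩ := exists_isProductRecurrence_eq c z
  rw [hp₀, hp₁, hp₂]
  simp only [mem_union, mem_ofPred_eq, or_assoc, hx.exists_norm_iterate_le_iff,
    hx.tendsto_iterate_iff, hx.tendsto_norm_iterate_sub_threeCycle_iff]
  rw [hx.exists_abs_le_iff hc1 hc2, IsAsymptoticToPeriodic, exists_tendsto_sub_threeCycle_iff]
end

section
/- Let c ∈ ℝ with -1 < c < 0. Then f(R₀) ⊆ R₀ ∪ R₁, f(R₁) ⊆ R₂, f(R₂) ⊆ R₂ ∪ R₃ and f(R₃) ⊆ R₁. -/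
open Set Filter Topology

/-!
On each of the four rectangles the product `x * y` has constant sign, and its absolute value is at
most that at the far corner: `(1 + c) * a₂` on `R₀`, `1 + c` on `R₁` and `R₃`, and `1` on `R₂`.
The bound on `R₀` is again at most `1`: since `a₂ ^ 2 = a₂ - c`, the difference `1 - (1 + c) * a₂`
equals `(a₂ - 1) ^ 2 * (a₂ + 1)`. Adding `c` locates the first coordinate of the image, and its
second coordinate is `x`, which on `R₀` satisfies `x ≤ 1 + c ≤ 1 ≤ a₂`.
-/

section OrderedAddGroup

variable {G : Type*} [AddCommGroup G]

lemma neg_mem_Icc_zero_of_mem_Icc_neg [PartialOrder G] [IsOrderedAddMonoid G] {a x : G}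
    (hx : x ∈ Icc (-a) 0) : -x ∈ Icc 0 a :=
  neg_mem_Icc_iff.mpr (by rwa [neg_zero])

lemma add_mem_Icc_neg_zero [PartialOrder G] [IsOrderedAddMonoid G] {a c x : G} (hc : c ≤ 0)
    (hx : x ∈ Icc (-(a + c)) 0) : x + c ∈ Icc (-a) 0 := by
  refine ⟨?_, add_nonpos hx.2 hc⟩
  calc -a = -(a + c) + c := by abel
    _ ≤ x + c := by gcongr; exact hx.1

lemma add_mem_Icc_neg_zero_or_Icc_zero_add [LinearOrder G] [IsOrderedAddMonoid G] {a b c x : G}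
    (hc : -a ≤ c) (hx : x ∈ Icc 0 b) : x + c ∈ Icc (-a) 0 ∨ x + c ∈ Icc 0 (b + c) := by
  have hlower : -a ≤ x + c := hc.trans (le_add_of_nonneg_left hx.1)
  have hupper : x + c ≤ b + c := by gcongr; exact hx.2
  exact (le_total (x + c) 0).imp (⟨hlower, ·⟩) (⟨·, hupper⟩)

end OrderedAddGroup

section OrderedRing

lemma mul_mem_Icc_of_nonneg_of_nonneg {R : Type*} [Semiring R] [PartialOrder R] [IsOrderedRing R]
    {a b x y : R} (hx : x ∈ Icc 0 a) (hy : y ∈ Icc 0 b) : x * y ∈ Icc 0 (a * b) :=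
  ⟨mul_nonneg hx.1 hy.1, mul_le_mul hx.2 hy.2 hy.1 (hx.1.trans hx.2)⟩

variable {R : Type*} [Ring R] [PartialOrder R] [IsOrderedRing R] {a b x y : R}

lemma mul_mem_Icc_of_nonpos_of_nonpos (hx : x ∈ Icc (-a) 0) (hy : y ∈ Icc (-b) 0) :
    x * y ∈ Icc 0 (a * b) := by
  rw [← neg_mul_neg x y]
  exact mul_mem_Icc_of_nonneg_of_nonneg (neg_mem_Icc_zero_of_mem_Icc_neg hx)
    (neg_mem_Icc_zero_of_mem_Icc_neg hy)

lemma mul_mem_Icc_of_nonpos_of_nonneg (hx : x ∈ Icc (-a) 0) (hy : y ∈ Icc 0 b) :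
    x * y ∈ Icc (-(a * b)) 0 := by
  have hneg : -x * y ∈ Icc 0 (a * b) :=
    mul_mem_Icc_of_nonneg_of_nonneg (neg_mem_Icc_zero_of_mem_Icc_neg hx) hy
  rw [neg_mul] at hneg
  exact ⟨neg_le.mp hneg.2, neg_nonneg.mp hneg.1⟩

end OrderedRing

section FixedPoint

variable {c : ℝ}

lemma a2_sq (hc : c ≤ 1 / 4) : a2 c ^ 2 = a2 c - c := by
  have hsq : √(1 - 4 * c) ^ 2 = 1 - 4 * c := Real.sq_sqrt (by linarith)
  unfold a2
  linear_combination hsq / 4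

lemma a2_pos (c : ℝ) : 0 < a2 c := by
  unfold a2
  positivity

lemma one_le_a2 (hc : c ≤ 0) : 1 ≤ a2 c := by
  have hsqrt : 1 ≤ √(1 - 4 * c) := Real.one_le_sqrt.mpr (by linarith)
  unfold a2
  linarith

lemma one_add_mul_a2_le_one (hc : c ≤ 1 / 4) : (1 + c) * a2 c ≤ 1 := by
  have hpos := a2_pos c
  calc (1 + c) * a2 c = 1 - (a2 c - 1) ^ 2 * (a2 c + 1) := by
        linear_combination a2 c * a2_sq hc
    _ ≤ 1 := sub_le_self 1 (by positivity)

end FixedPoint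

/-- The rectangle `R₀`, in the first quadrant, which `fc c` maps into `R₀ ∪ R₁`. Its height is
the coordinate `a₂` of the fixed point `(a₂, a₂)` of `fc c`. -/
def rect₀ (c : ℝ) : Set (ℝ × ℝ) := Icc 0 (1 + c) ×ˢ Icc 0 (a2 c)

/-- The rectangle `R₁`, in the second quadrant, which receives the images of `R₃` and of part of
`R₀`. -/
def rect₁ (c : ℝ) : Set (ℝ × ℝ) := Icc (-1) 0 ×ˢ Icc 0 (1 + c)

/-- The square `R₂`, in the third quadrant, which receives the images of `R₁` and of part of
itself. Unlike the other three rectangles it does not depend on `c`. -/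
def rect₂ : Set (ℝ × ℝ) := Icc (-1) 0 ×ˢ Icc (-1) 0

/-- The rectangle `R₃`, in the fourth quadrant, which receives the image of part of `R₂`. -/
def rect₃ (c : ℝ) : Set (ℝ × ℝ) := Icc 0 (1 + c) ×ˢ Icc (-1) 0

section Dynamics

variable {c : ℝ}

lemma mapsTo_fc_rect₀ (hc : c ≤ 0) : MapsTo (fc c) (rect₀ c) (rect₀ c ∪ rect₁ c) := by
  rintro ⟨x, y⟩ ⟨hx, hy⟩
  have hc_lower : -1 ≤ c := neg_le_iff_add_nonneg'.mpr (hx.1.trans hx.2)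
  have hxy : x * y ∈ Icc 0 1 :=
    Icc_subset_Icc_right (one_add_mul_a2_le_one (by linarith))
      (mul_mem_Icc_of_nonneg_of_nonneg hx hy)
  have hside : 1 + c ≤ a2 c := by linarith [one_le_a2 hc]
  rcases add_mem_Icc_neg_zero_or_Icc_zero_add hc_lower hxy with hneg | hpos
  · exact Or.inr ⟨hneg, hx⟩
  · exact Or.inl ⟨hpos, Icc_subset_Icc_right hside hx⟩

lemma mapsTo_fc_rect₁ (hc : c ≤ 0) : MapsTo (fc c) (rect₁ c) rect₂ := by
  rintro ⟨x, y⟩ ⟨hx, hy⟩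
  have hxy : x * y ∈ Icc (-(1 + c)) 0 := by
    simpa only [one_mul] using mul_mem_Icc_of_nonpos_of_nonneg hx hy
  exact ⟨add_mem_Icc_neg_zero hc hxy, hx⟩

lemma mapsTo_fc_rect₂ (hc : -1 ≤ c) : MapsTo (fc c) rect₂ (rect₂ ∪ rect₃ c) := by
  rintro ⟨x, y⟩ ⟨hx, hy⟩
  have hxy : x * y ∈ Icc 0 1 := by
    simpa only [mul_one] using mul_mem_Icc_of_nonpos_of_nonpos hx hy
  exact (add_mem_Icc_neg_zero_or_Icc_zero_add hc hxy).imp (⟨·, hx⟩) (⟨·, hx⟩)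

lemma mapsTo_fc_rect₃ (hc : c ≤ 0) : MapsTo (fc c) (rect₃ c) (rect₁ c) := by
  rintro ⟨x, y⟩ ⟨hx, hy⟩
  have hxy : x * y ∈ Icc (-(1 + c)) 0 := by
    simpa only [one_mul, mul_comm y x] using mul_mem_Icc_of_nonpos_of_nonneg hy hx
  exact ⟨add_mem_Icc_neg_zero hc hxy, hx⟩

end Dynamics

theorem stmt6 (c : ℝ) (hc1 : -1 < c) (hc2 : c < 0) :
    fc c '' (Icc (0 : ℝ) (1 + c) ×ˢ Icc (0 : ℝ) (a2 c)) ⊆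
      Icc (0 : ℝ) (1 + c) ×ˢ Icc (0 : ℝ) (a2 c) ∪ Icc (-1 : ℝ) 0 ×ˢ Icc (0 : ℝ) (1 + c) ∧
    fc c '' (Icc (-1 : ℝ) 0 ×ˢ Icc (0 : ℝ) (1 + c)) ⊆ Icc (-1 : ℝ) 0 ×ˢ Icc (-1 : ℝ) 0 ∧
    fc c '' (Icc (-1 : ℝ) 0 ×ˢ Icc (-1 : ℝ) 0) ⊆
      Icc (-1 : ℝ) 0 ×ˢ Icc (-1 : ℝ) 0 ∪ Icc (0 : ℝ) (1 + c) ×ˢ Icc (-1 : ℝ) 0 ∧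
    fc c '' (Icc (0 : ℝ) (1 + c) ×ˢ Icc (-1 : ℝ) 0) ⊆ Icc (-1 : ℝ) 0 ×ˢ Icc (0 : ℝ) (1 + c) :=
  ⟨(mapsTo_fc_rect₀ hc2.le).image_subset, (mapsTo_fc_rect₁ hc2.le).image_subset,
    (mapsTo_fc_rect₂ hc1.le).image_subset, (mapsTo_fc_rect₃ hc2.le).image_subset⟩
end

section
/- Let c ∈ ℝ with -1 < c < 0. If z ∈ R₂ \ {p}, then there exists N ∈ ℕ such that fⁿ(z) ∈ Y for all n ≥ N. -/
open Set Filter Topology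

/-!
Write `Q s = [-s, 0]²`, so that `R₂ = Q 1` and `Y = Q (-c)`. The third iterate of `f` sends a point
`(x, y)` of `R₂` into `Q (max (x * y) (-c))`. Since `x * y ≤ s²` on `Q s`, it sends `Q (max a (-c))`
into `Q (max a² (-c))` for `a ≤ 1`. A point of `R₂` other than `p` has `x * y < 1`, hence the
iterated squares of `x * y` drop below `-c`, and the orbit enters `Y`, which `f` maps into itself.
-/

/-- The square `[-s, 0]²`, the common form of `R₂` (`s = 1`) and `Y` (`s = -c`); it is empty for
`s < 0`. -/
def negSquare (s : ℝ) : Set (ℝ × ℝ) := Icc (-s) 0 ×ˢ Icc (-s) 0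

lemma negSquare_mono : Monotone negSquare := fun _ _ hst =>
  prod_mono (Icc_subset_Icc_left (neg_le_neg hst)) (Icc_subset_Icc_left (neg_le_neg hst))

lemma mul_mem_Icc_of_mem_negSquare {s : ℝ} {z : ℝ × ℝ} (hz : z ∈ negSquare s) :
    z.1 * z.2 ∈ Icc 0 (s ^ 2) := by
  obtain ⟨⟨hx, hx0⟩, hy, hy0⟩ := hz
  refine ⟨mul_nonneg_of_nonpos_of_nonpos hx0 hy0, ?_⟩
  calc z.1 * z.2 = -z.1 * -z.2 := (neg_mul_neg _ _).symm
    _ ≤ s * s := mul_le_mul (neg_le.mp hx) (neg_le.mp hy) (neg_nonneg.mpr hy0) (by linarith)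
    _ = s ^ 2 := (sq s).symm

lemma mul_lt_one_of_mem_negSquare_one {z : ℝ × ℝ} (hz : z ∈ negSquare 1) (hp : z ≠ (-1, -1)) :
    z.1 * z.2 < 1 := by
  obtain ⟨⟨hx, hx0⟩, hy, hy0⟩ := hz
  by_contra! h
  exact hp (Prod.ext (by nlinarith) (by nlinarith))

lemma mul_add_mem_Icc {R : Type*} [CommRing R] [LinearOrder R] [IsStrictOrderedRing R]
    {c m v x : R} (hc : c ≤ 0) (hcm : -c ≤ m) (hv : v ∈ Icc c (m + c)) (hx : x ∈ Icc (-1) 0) :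
    v * x + c ∈ Icc (-m) 0 := by
  obtain ⟨hcv, hvm⟩ := hv
  obtain ⟨hx1, hx0⟩ := hx
  rcases le_total v 0 with hv0 | hv0
  · have hlower : 0 ≤ v * x := mul_nonneg_of_nonpos_of_nonpos hv0 hx0
    have hupper : v * x ≤ -v := by nlinarith
    constructor <;> linarith
  · have hlower : -v ≤ v * x := by nlinarith
    have hupper : v * x ≤ 0 := mul_nonpos_of_nonneg_of_nonpos hv0 hx0
    constructor <;> linarith

lemma mapsTo_fc_negSquare_neg {c : ℝ} (hc1 : -1 ≤ c) (hc0 : c ≤ 0) :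
    MapsTo (fc c) (negSquare (-c)) (negSquare (-c)) := by
  rintro ⟨x, y⟩ ⟨hx, hy⟩
  have hx' : x ∈ Icc c (-c + c) := by simpa using hx
  exact ⟨mul_add_mem_Icc hc0 le_rfl hx' ⟨by linarith [hy.1], hy.2⟩, hx⟩

lemma fc_iterate_three_mem_negSquare {c : ℝ} (hc1 : -1 ≤ c) (hc0 : c ≤ 0)
    {z : ℝ × ℝ} (hz : z ∈ negSquare 1) :
    (fc c)^[3] z ∈ negSquare (max (z.1 * z.2) (-c)) := by
  obtain ⟨hxy0, hxy1⟩ := mul_mem_Icc_of_mem_negSquare hz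
  set m := max (z.1 * z.2) (-c)
  have hcm : -c ≤ m := le_max_right _ _
  have hm1 : m ≤ 1 := max_le (by simpa using hxy1) (by linarith)
  set v := z.1 * z.2 + c
  have hv : v ∈ Icc c (m + c) :=
    ⟨le_add_of_nonneg_left hxy0, add_le_add_left (le_max_left _ _) c⟩
  have hu : v * z.1 + c ∈ Icc (-m) 0 := mul_add_mem_Icc hc0 hcm hv hz.1
  have hw : v * (v * z.1 + c) + c ∈ Icc (-m) 0 :=
    mul_add_mem_Icc hc0 hcm hv ⟨by linarith [hu.1], hu.2⟩
  have hf : (fc c)^[3] z = (v * (v * z.1 + c) + c, v * z.1 + c) :=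
    Prod.ext (congrArg (· + c) (mul_comm _ _)) rfl
  rw [hf]
  exact ⟨hw, hu⟩

lemma mapsTo_fc_iterate_three {c a : ℝ} (hc1 : -1 ≤ c) (hc0 : c ≤ 0) (ha1 : a ≤ 1) :
    MapsTo (fc c)^[3] (negSquare (max a (-c))) (negSquare (max (a ^ 2) (-c))) := by
  intro z hz
  have hz1 : z ∈ negSquare 1 := negSquare_mono (max_le ha1 (by linarith)) hz
  have hsq : max a (-c) ^ 2 ≤ max (a ^ 2) (-c) := by
    rcases max_cases a (-c) with ⟨h, -⟩ | ⟨h, -⟩ <;> rw [h]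
    · exact le_max_left _ _
    · exact le_max_of_le_right (by nlinarith)
  have hxy : z.1 * z.2 ≤ max (a ^ 2) (-c) := (mul_mem_Icc_of_mem_negSquare hz).2.trans hsq
  exact negSquare_mono (max_le hxy (le_max_right _ _)) (fc_iterate_three_mem_negSquare hc1 hc0 hz1)

lemma mapsTo_fc_iterate_three_mul {c a : ℝ} (hc1 : -1 ≤ c) (hc0 : c ≤ 0) (ha0 : 0 ≤ a)
    (ha1 : a ≤ 1) (k : ℕ) :
    MapsTo (fc c)^[3 * k] (negSquare (max a (-c))) (negSquare (max (a ^ 2 ^ k) (-c))) := by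
  induction k with
  | zero => simpa using mapsTo_id _
  | succ k ih =>
    have hstep := mapsTo_fc_iterate_three hc1 hc0 (pow_le_one₀ (n := 2 ^ k) ha0 ha1)
    rw [mul_add_one, add_comm, Function.iterate_add, pow_succ 2, pow_mul]
    exact hstep.comp ih

lemma exists_fc_iterate_mem_negSquare_neg {c : ℝ} (hc1 : -1 ≤ c) (hc0 : c < 0) {z : ℝ × ℝ}
    (hz : z ∈ negSquare 1) (hp : z ≠ (-1, -1)) :
    ∃ N : ℕ, (fc c)^[N] z ∈ negSquare (-c) := by
  have hxy0 : 0 ≤ z.1 * z.2 := (mul_mem_Icc_of_mem_negSquare hz).1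
  have hxy1 : z.1 * z.2 < 1 := mul_lt_one_of_mem_negSquare_one hz hp
  obtain ⟨k, hk⟩ := exists_pow_lt_of_lt_one (neg_pos.mpr hc0) hxy1
  have hsmall : (z.1 * z.2) ^ 2 ^ k ≤ -c :=
    (pow_le_pow_of_le_one hxy0 hxy1.le Nat.lt_two_pow_self.le).trans hk.le
  refine ⟨3 * k + 3, ?_⟩
  rw [Function.iterate_add_apply, ← max_eq_right hsmall]
  exact mapsTo_fc_iterate_three_mul hc1 hc0.le hxy0 hxy1.le k
    (fc_iterate_three_mem_negSquare hc1 hc0.le hz)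

theorem stmt8 (c : ℝ) (hc1 : -1 < c) (hc2 : c < 0) (z : ℝ × ℝ)
    (hz : z ∈ Icc (-1 : ℝ) 0 ×ˢ Icc (-1 : ℝ) 0 \ {((-1, -1) : ℝ × ℝ)}) :
    ∃ N : ℕ, ∀ n ≥ N, (fc c)^[n] z ∈ Icc c 0 ×ˢ Icc c 0 := by
  have hY : Icc c 0 ×ˢ Icc c 0 = negSquare (-c) := by rw [negSquare, neg_neg]
  obtain ⟨N, hN⟩ := exists_fc_iterate_mem_negSquare_neg hc1.le hc2 hz.1 hz.2
  refine ⟨N, fun n hn => ?_⟩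
  rw [hY, ← Nat.sub_add_cancel hn, Function.iterate_add_apply]
  exact (mapsTo_fc_negSquare_neg hc1.le hc2.le).iterate (n - N) hN
end

section
/- Let c ∈ ℝ with -1 < c < 0. Then f(RR) ⊆ SS ∪ TT, f(SS) ⊆ TT, f(TT) ⊆ UU ∪ RR and f(UU) ⊆ RR. -/
open Set Filter Topology

/-!
On a rectangle in the closed third quadrant the product `xy` is antitone in each variable, so `fc c`
maps `[p, q] × [r, s]` into `[qs + c, pr + c] × [p, q]`. The four inclusions follow by evaluating
these endpoints at `c`, `a₁` and `0`: the fixed-point equation `a₁² + c = a₁` makes `a₁` an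
endpoint, and `-1 ≤ c ≤ a₁` keeps the upper endpoints `c² + c` and `a₁c + c` nonpositive. Where the
first coordinate is only confined to `[c, 0]`, that interval is cut at `a₁`.
-/

theorem mul_mem_Icc_of_nonpos {R : Type*} [Ring R] [PartialOrder R] [IsOrderedRing R]
    {p q r s x y : R} (hq : q ≤ 0) (hs : s ≤ 0) (hx : x ∈ Icc p q) (hy : y ∈ Icc r s) :
    x * y ∈ Icc (q * s) (p * r) :=
  ⟨mul_le_mul_of_nonpos_of_nonpos hx.2 hy.2 (hx.2.trans hq) hs,
    mul_le_mul_of_nonpos_of_nonpos hx.1 hy.1 (hx.1.trans (hx.2.trans hq)) (hy.2.trans hs)⟩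

theorem mul_add_self_nonpos {R : Type*} [Ring R] [PartialOrder R] [IsOrderedRing R]
    {x c : R} (hx : -1 ≤ x) (hc : c ≤ 0) : x * c + c ≤ 0 := by
  rw [← add_one_mul]
  exact mul_nonpos_of_nonneg_of_nonpos (neg_le_iff_add_nonneg.mp hx) hc

theorem fc_image_prod_Icc_subset {c p q r s l u : ℝ} (hq : q ≤ 0) (hs : s ≤ 0)
    (hl : l ≤ q * s + c) (hu : p * r + c ≤ u) :
    fc c '' (Icc p q ×ˢ Icc r s) ⊆ Icc l u ×ˢ Icc p q := by
  rintro _ ⟨⟨x, y⟩, ⟨hx, hy⟩, rfl⟩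
  have hxy : x * y ∈ Icc (q * s) (p * r) := mul_mem_Icc_of_nonpos hq hs hx hy
  exact ⟨⟨hl.trans (add_le_add_left hxy.1 c), (add_le_add_left hxy.2 c).trans hu⟩, hx⟩

section a1

variable {c : ℝ}

theorem a1_mul_self_add (hc : c ≤ 1 / 4) : a1 c * a1 c + c = a1 c := by
  have sq_sqrt_disc : √(1 - 4 * c) ^ 2 = 1 - 4 * c := Real.sq_sqrt (by linarith)
  unfold a1
  linear_combination sq_sqrt_disc / 4

theorem le_a1 (hc : c ≤ 1 / 4) : c ≤ a1 c := by
  linarith [a1_mul_self_add hc, mul_self_nonneg (a1 c)]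

theorem a1_nonpos (hc : c ≤ 0) : a1 c ≤ 0 := by
  have one_le_sqrt_disc : 1 ≤ √(1 - 4 * c) := Real.one_le_sqrt.mpr (by linarith)
  unfold a1
  linarith

end a1

theorem stmt9 (c : ℝ) (hc1 : -1 < c) (hc2 : c < 0) :
    fc c '' (Icc (a1 c) 0 ×ˢ Icc c (a1 c)) ⊆
      Icc (a1 c) 0 ×ˢ Icc (a1 c) 0 ∪ Icc c (a1 c) ×ˢ Icc (a1 c) 0 ∧
    fc c '' (Icc (a1 c) 0 ×ˢ Icc (a1 c) 0) ⊆ Icc c (a1 c) ×ˢ Icc (a1 c) 0 ∧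
    fc c '' (Icc c (a1 c) ×ˢ Icc (a1 c) 0) ⊆
      Icc c (a1 c) ×ˢ Icc c (a1 c) ∪ Icc (a1 c) 0 ×ˢ Icc c (a1 c) ∧
    fc c '' (Icc c (a1 c) ×ˢ Icc c (a1 c)) ⊆ Icc (a1 c) 0 ×ˢ Icc c (a1 c) := by
  have fixed : a1 c * a1 c + c = a1 c := a1_mul_self_add (by linarith)
  have a1_le : a1 c ≤ 0 := a1_nonpos hc2.le
  have c_le : c ≤ a1 c := le_a1 (by linarith)
  have a1_mul_c : a1 c * c + c ≤ 0 := mul_add_self_nonpos (hc1.le.trans c_le) hc2.le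
  have c_mul_c : c * c + c ≤ 0 := mul_add_self_nonpos hc1.le hc2.le
  have cut : Icc c (a1 c) ∪ Icc (a1 c) 0 = Icc c 0 := Icc_union_Icc_eq_Icc c_le a1_le
  refine ⟨?_, ?_, ?_, ?_⟩
  · rw [← union_prod, union_comm, cut]
    exact fc_image_prod_Icc_subset le_rfl a1_le (by simp) a1_mul_c
  · exact fc_image_prod_Icc_subset le_rfl le_rfl (by simp) fixed.le
  · rw [← union_prod, cut]
    exact fc_image_prod_Icc_subset a1_le le_rfl (by simp) (mul_comm c (a1 c) ▸ a1_mul_c)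
  · exact fc_image_prod_Icc_subset a1_le a1_le fixed.ge c_mul_c
end

section
/- Let c ∈ ℝ with -3/4 < c < 0. If z ∈ Y, then fⁿ(z) → (a₁,a₁) as n → +∞. -/
open Set Filter Topology

/-!
The square `Y = [c, 0]²` is compact and invariant, so the `ω`-limit set `L` of a point of `Y` is a
compact subset of `Y` with `L ⊆ f(L)`. Let `m` and `M` be the extreme values of the first coordinate
on `L`. Going back three times inside `L`, each of them has the form `(ab + c)a + c` with
`a, b ∈ [m, M]`. Since `b ≥ m`, the equation for `m` gives `m(1 - a²) ≥ c(1 + a)`; dividing by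
`1 + a > 0` and using `a ≤ M`, we get `m(1 - M) ≥ c`. In the same way `M(1 - m) ≤ c`, whence
`M ≤ m`. So `L` is a single point, and it is fixed.
-/

section OmegaLimit

variable {X : Type*} [TopologicalSpace X] {f : X → X} {K : Set X} {z p : X}

lemma omegaLimit_iterate_subset (hK : IsClosed K) (hf : MapsTo f K K) (hz : z ∈ K) :
    omegaLimit atTop (fun n => f^[n]) {z} ⊆ K := by
  refine (omegaLimit_subset_closure_image2 _ _ _ univ_mem).trans (closure_minimal ?_ hK)
  rintro _ ⟨n, -, _, rfl, rfl⟩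
  exact hf.iterate n hz

lemma surjOn_omegaLimit_iterate [T2Space X] (hK : IsCompact K) (hf : MapsTo f K K)
    (hcont : ContinuousOn f K) (hz : z ∈ K) :
    SurjOn f (omegaLimit atTop (fun n => f^[n]) {z}) (omegaLimit atTop (fun n => f^[n]) {z}) := by
  intro p hp
  rw [mem_omegaLimit_singleton_iff_mapClusterPt, mapClusterPt_iff_ultrafilter] at hp
  obtain ⟨U, hU, hUp⟩ := hp
  have hmem : ∀ n, f^[n - 1] z ∈ K := fun n => hf.iterate (n - 1) hz
  obtain ⟨q, hqK, hUq⟩ : ∃ q ∈ K, Tendsto (fun n => f^[n - 1] z) U (𝓝 q) :=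
    hK.ultrafilter_le_nhds (U.map fun n => f^[n - 1] z)
      (tendsto_principal.2 (Eventually.of_forall hmem))
  refine ⟨q, ?_, ?_⟩
  · rw [mem_omegaLimit_singleton_iff_mapClusterPt]
    exact MapClusterPt.of_comp ((tendsto_sub_atTop_nat 1).mono_left hU) hUq.mapClusterPt
  · have hUfq : Tendsto (fun n => f (f^[n - 1] z)) U (𝓝 (f q)) :=
      (hcont q hqK).tendsto.comp
        (tendsto_nhdsWithin_iff.2 ⟨hUq, Eventually.of_forall hmem⟩)
    refine tendsto_nhds_unique (hUfq.congr' ?_) hUp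
    filter_upwards [hU (eventually_ge_atTop 1)] with n hn
    rw [← Function.iterate_succ_apply' f, Nat.succ_eq_add_one, Nat.sub_add_cancel hn]

theorem tendsto_iterate_of_surjOn_subset_singleton [T2Space X] (hK : IsCompact K)
    (hf : MapsTo f K K) (hcont : ContinuousOn f K) (hz : z ∈ K)
    (h : ∀ L ⊆ K, IsCompact L → SurjOn f L L → L ⊆ {p}) :
    Tendsto (fun n => f^[n] z) atTop (𝓝 p) := by
  have hsub := omegaLimit_iterate_subset hK.isClosed hf hz
  have hsingle := h _ hsub (hK.of_isClosed_subset (isClosed_omegaLimit _ _ _) hsub)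
    (surjOn_omegaLimit_iterate hK hf hcont hz)
  refine hK.tendsto_nhds_of_unique_mapClusterPt
    (Eventually.of_forall fun n => hf.iterate n hz) fun q _ hq => hsingle ?_
  exact (mem_omegaLimit_singleton_iff_mapClusterPt _ _ _ _).2 hq

end OmegaLimit

section QuadraticMap

variable {c : ℝ}

lemma continuous_fc (c : ℝ) : Continuous (fc c) := by
  unfold fc
  fun_prop

lemma mapsTo_fc_Icc_prod_Icc (hc : -1 ≤ c) :
    MapsTo (fc c) (Icc c 0 ×ˢ Icc c 0) (Icc c 0 ×ˢ Icc c 0) := by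
  rintro ⟨x, y⟩ ⟨⟨hcx, hx⟩, hcy, hy⟩
  have hxy_nonneg : 0 ≤ x * y := mul_nonneg_of_nonpos_of_nonpos hx hy
  have hxy_le : x * y ≤ -c := by nlinarith
  exact ⟨⟨show c ≤ x * y + c by linarith, show x * y + c ≤ 0 by linarith⟩, hcx, hx⟩

lemma eq_a1_of_mul_self_add_eq {x : ℝ} (hfix : x * x + c = x) (hx : x ≤ 1 / 2) : x = a1 c := by
  have hdisc : 1 - 4 * c = (1 - 2 * x) ^ 2 := by linear_combination -4 * hfix
  rw [a1, hdisc, Real.sqrt_sq (by linarith)]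
  ring

lemma le_mul_one_sub_of_eq {m M a b : ℝ} (hm : m ≤ 0) (ha : -1 < a) (haM : a ≤ M) (hmb : m ≤ b)
    (h : m = (a * b + c) * a + c) : c ≤ m * (1 - M) := by
  have hfactored : (1 + a) * c ≤ (1 + a) * (m * (1 - a)) := by
    linear_combination a ^ 2 * hmb - h
  calc c ≤ m * (1 - a) := le_of_mul_le_mul_left hfactored (by linarith)
    _ ≤ m * (1 - M) := mul_le_mul_of_nonpos_left (by linarith) hm

lemma mul_one_sub_le_of_eq {m M a b : ℝ} (hM : M ≤ 0) (ha : -1 < a) (hma : m ≤ a) (hbM : b ≤ M)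
    (h : M = (a * b + c) * a + c) : M * (1 - m) ≤ c := by
  have hfactored : (1 + a) * (M * (1 - a)) ≤ (1 + a) * c := by
    linear_combination a ^ 2 * hbM + h
  calc M * (1 - m) ≤ M * (1 - a) := mul_le_mul_of_nonpos_left (by linarith) hM
    _ ≤ c := le_of_mul_le_mul_left hfactored (by linarith)

variable {L : Set (ℝ × ℝ)}

lemma snd_mem_fst_image_of_surjOn_fc (hL : SurjOn (fc c) L L) {p : ℝ × ℝ} (hp : p ∈ L) :
    p.2 ∈ Prod.fst '' L := by
  obtain ⟨q, hq, rfl⟩ := hL hp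
  exact ⟨q, hq, rfl⟩

lemma exists_eq_of_mem_fst_image_of_surjOn_fc (hL : SurjOn (fc c) L L) {x : ℝ}
    (hx : x ∈ Prod.fst '' L) :
    ∃ a ∈ Prod.fst '' L, ∃ b ∈ Prod.fst '' L, x = (a * b + c) * a + c := by
  obtain ⟨_, hp, rfl⟩ := hx
  obtain ⟨_, hq, rfl⟩ := hL hp
  obtain ⟨r, hr, rfl⟩ := hL hq
  exact ⟨r.1, mem_image_of_mem _ hr, r.2, snd_mem_fst_image_of_surjOn_fc hL hr, rfl⟩

lemma subsingleton_fst_image_of_surjOn_fc (hc : -1 < c) (hcompact : IsCompact L)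
    (hLY : L ⊆ Icc c 0 ×ˢ Icc c 0) (hL : SurjOn (fc c) L L) : (Prod.fst '' L).Subsingleton := by
  rcases L.eq_empty_or_nonempty with rfl | hne
  · simp
  have hrange : ∀ x ∈ Prod.fst '' L, x ∈ Icc c 0 := forall_mem_image.2 fun p hp => (hLY hp).1
  have hfst : IsCompact (Prod.fst '' L) := hcompact.image continuous_fst
  obtain ⟨m, hmL, hm⟩ := hfst.exists_isLeast (hne.image _)
  obtain ⟨M, hML, hM⟩ := hfst.exists_isGreatest (hne.image _)
  have hlower : c ≤ m * (1 - M) := by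
    obtain ⟨a, ha, b, hb, heq⟩ := exists_eq_of_mem_fst_image_of_surjOn_fc hL hmL
    exact le_mul_one_sub_of_eq (hrange m hmL).2 (hc.trans_le (hrange a ha).1) (hM ha) (hm hb) heq
  have hupper : M * (1 - m) ≤ c := by
    obtain ⟨a, ha, b, hb, heq⟩ := exists_eq_of_mem_fst_image_of_surjOn_fc hL hML
    exact mul_one_sub_le_of_eq (hrange M hML).2 (hc.trans_le (hrange a ha).1) (hm ha) (hM hb) heq
  have hMm : M ≤ m := by linarith
  exact fun x hx y hy =>
    le_antisymm ((hM hx).trans (hMm.trans (hm hy))) ((hM hy).trans (hMm.trans (hm hx)))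

lemma subset_singleton_a1_of_surjOn_fc (hc : -1 < c) (hcompact : IsCompact L)
    (hLY : L ⊆ Icc c 0 ×ˢ Icc c 0) (hL : SurjOn (fc c) L L) : L ⊆ {(a1 c, a1 c)} := by
  have hsub := subsingleton_fst_image_of_surjOn_fc hc hcompact hLY hL
  have hdiag : ∀ p ∈ L, p.2 = p.1 := fun p hp =>
    hsub (snd_mem_fst_image_of_surjOn_fc hL hp) (mem_image_of_mem _ hp)
  intro p hp
  obtain ⟨q, hq, hqp⟩ := hL hp
  have hq_fst : q.1 = p.1 := hsub (mem_image_of_mem _ hq) (mem_image_of_mem _ hp)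
  have hfix : p.1 * p.1 + c = p.1 := by
    simpa only [fc, hdiag q hq, hq_fst] using congrArg Prod.fst hqp
  have hp_fst : p.1 = a1 c := eq_a1_of_mul_self_add_eq hfix ((hLY hp).1.2.trans (by norm_num))
  exact Prod.ext hp_fst ((hdiag p hp).trans hp_fst)

end QuadraticMap

theorem stmt10_general (c : ℝ) (hc : -1 < c) (z : ℝ × ℝ) (hz : z ∈ Icc c 0 ×ˢ Icc c 0) :
    Tendsto (fun n => (fc c)^[n] z) atTop (𝓝 (a1 c, a1 c)) :=
  tendsto_iterate_of_surjOn_subset_singleton (isCompact_Icc.prod isCompact_Icc)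
    (mapsTo_fc_Icc_prod_Icc hc.le) (continuous_fc c).continuousOn hz
    fun _ hLY hcompact hL => subset_singleton_a1_of_surjOn_fc hc hcompact hLY hL

theorem stmt10 (c : ℝ) (hc1 : -3/4 < c) (hc2 : c < 0) (z : ℝ × ℝ)
    (hz : z ∈ Icc c 0 ×ˢ Icc c 0) :
    Tendsto (fun n => (fc c)^[n] z) atTop (𝓝 (a1 c, a1 c)) :=
  stmt10_general c (by linarith) z hz
end
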